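/- Suppose m u∞² > γRT∞ + 1 and u∞ < 0 (the nondegenerate Bohm criterion). Then there exists δ > 0 such that for every real φ_b with 0 < |φ_b| ≤ δ, the planar stationary problem with boundary value φ̃(0) = φ_b admits a solution (ñ, ũ, T̃, φ̃) with φ̃ monotone, and this monotone solution is unique. -/

import Mathlib

/-- The planar stationary (sheath) problem for the full Euler–Poisson system on the
half line `[0,∞)`: `ñ, ũ, T̃, φ̃` are continuous on `[0,∞)`, with
`ñ, ũ, T̃, φ̃, φ̃'` continuously differentiable on `(0,∞)`, satisfying the stationary
equations `(ñũ)' = 0`, `m ñũũ' + (RT̃ñ)' = ñφ̃'`, `ũT̃' + (γ−1)T̃ũ' = 0`,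
`φ̃'' = ñ − e^{−φ̃}`, with `inf ñ > 0`, `inf T̃ > 0`, far-field values
`(1, u∞, T∞, 0)` and boundary condition `φ̃(0) = φ_b`. -/
def IsPlanarStationary (γ R Tinf m uinf φb : ℝ) (n u T φ : ℝ → ℝ) : Prop :=
  ContinuousOn n (Set.Ici 0) ∧ ContinuousOn u (Set.Ici 0) ∧
  ContinuousOn T (Set.Ici 0) ∧ ContinuousOn φ (Set.Ici 0) ∧
  (∃ ε > 0, ∀ x ∈ Set.Ici (0 : ℝ), ε ≤ n x) ∧
  (∃ ε > 0, ∀ x ∈ Set.Ici (0 : ℝ), ε ≤ T x) ∧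
  Filter.Tendsto n Filter.atTop (nhds 1) ∧
  Filter.Tendsto u Filter.atTop (nhds uinf) ∧
  Filter.Tendsto T Filter.atTop (nhds Tinf) ∧
  Filter.Tendsto φ Filter.atTop (nhds 0) ∧
  φ 0 = φb ∧
  ∃ n' u' T' φd φd' : ℝ → ℝ,
    (∀ x ∈ Set.Ioi (0 : ℝ), HasDerivAt n (n' x) x) ∧ ContinuousOn n' (Set.Ioi 0) ∧
    (∀ x ∈ Set.Ioi (0 : ℝ), HasDerivAt u (u' x) x) ∧ ContinuousOn u' (Set.Ioi 0) ∧
    (∀ x ∈ Set.Ioi (0 : ℝ), HasDerivAt T (T' x) x) ∧ ContinuousOn T' (Set.Ioi 0) ∧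
    (∀ x ∈ Set.Ioi (0 : ℝ), HasDerivAt φ (φd x) x) ∧ ContinuousOn φd (Set.Ioi 0) ∧
    (∀ x ∈ Set.Ioi (0 : ℝ), HasDerivAt φd (φd' x) x) ∧ ContinuousOn φd' (Set.Ioi 0) ∧
    (∀ x ∈ Set.Ioi (0 : ℝ), n' x * u x + n x * u' x = 0) ∧
    (∀ x ∈ Set.Ioi (0 : ℝ),
      m * n x * u x * u' x + R * (T' x * n x + T x * n' x) = n x * φd x) ∧
    (∀ x ∈ Set.Ioi (0 : ℝ), u x * T' x + (γ - 1) * T x * u' x = 0) ∧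
    (∀ x ∈ Set.Ioi (0 : ℝ), φd' x = n x - Real.exp (-φ x))

/-!
Mass, energy and momentum conservation integrate to `u = u∞ / n`, `T = T∞ n ^ (γ - 1)` and
`φ = U(n)`, where `U` is the ion potential of the flow. Bohm's criterion says `U'(1) < -1`, so near
`n = 1` the density is a function `ν(φ)` and the charge `h(φ) = ν(φ) - e^{-φ}` vanishes at `0` with
positive slope there. What remains is the problem `φ'' = h(φ)`, `φ(0) = φ_b`, `φ(∞) = 0` with `h`
increasing: a monotone solution comes from the first integral `φ'^2 = 2 ∫₀^φ h`, and two small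
solutions agree because the square of their difference is convex.
-/

open Set Filter Topology

section HalfLine

variable {a : ℝ}

lemma eqOn_Ici_of_hasDerivAt_zero_of_tendsto {E : Type*} [NormedAddCommGroup E] [NormedSpace ℝ E]
    {f : ℝ → E} {L : E} (hcont : ContinuousOn f (Ici a))
    (hderiv : ∀ x ∈ Ioi a, HasDerivAt f 0 x) (hlim : Tendsto f atTop (𝓝 L)) :
    EqOn f (fun _ => L) (Ici a) := by
  obtain ⟨c, hc⟩ := isOpen_Ioi.exists_is_const_of_deriv_eq_zero isPreconnected_Ioi
    (fun x hx => (hderiv x hx).differentiableAt.differentiableWithinAt)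
    (fun x hx => (hderiv x hx).deriv)
  have hcL : c = L := tendsto_nhds_unique
    (tendsto_const_nhds.congr' ((eventually_gt_atTop a).mono fun x hx => (hc x hx).symm)) hlim
  subst hcL
  exact EqOn.of_subset_closure hc hcont continuousOn_const Ioi_subset_Ici_self
    (closure_Ioi a).ge

lemma exists_pos_forall_Ici_le_of_tendsto {f : ℝ → ℝ} {L : ℝ} (hcont : ContinuousOn f (Ici a))
    (hpos : ∀ x ∈ Ici a, 0 < f x) (hlim : Tendsto f atTop (𝓝 L)) (hL : 0 < L) :
    ∃ ε > 0, ∀ x ∈ Ici a, ε ≤ f x := by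
  obtain ⟨b, hb⟩ := eventually_atTop.1 (hlim.eventually (lt_mem_nhds (half_lt_self hL)))
  obtain ⟨y, hy, hmin⟩ := (isCompact_Icc (a := a) (b := max a b)).exists_isMinOn
    (nonempty_Icc.2 (le_max_left a b)) (hcont.mono Icc_subset_Ici_self)
  refine ⟨min (f y) (L / 2), lt_min (hpos y hy.1) (half_pos hL), fun x hx => ?_⟩
  rcases le_total x (max a b) with hxb | hbx
  · exact (min_le_left _ _).trans (hmin ⟨hx, hxb⟩)
  · exact (min_le_right _ _).trans (hb x ((le_max_right a b).trans hbx)).le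

lemma abs_le_abs_of_antitoneOn_Ici_of_tendsto_zero {f : ℝ → ℝ} (hanti : AntitoneOn f (Ici a))
    (hlim : Tendsto f atTop (𝓝 0)) {x : ℝ} (hx : x ∈ Ici a) : |f x| ≤ |f a| := by
  have hnonneg : 0 ≤ f x := le_of_tendsto hlim <| (eventually_ge_atTop x).mono fun y hxy =>
    hanti hx (mem_Ici.2 (le_trans hx hxy)) hxy
  exact abs_le_abs_of_nonneg hnonneg (hanti self_mem_Ici hx hx)

lemma abs_le_abs_of_monotoneOn_or_antitoneOn_Ici_of_tendsto_zero {f : ℝ → ℝ}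
    (hf : MonotoneOn f (Ici a) ∨ AntitoneOn f (Ici a)) (hlim : Tendsto f atTop (𝓝 0))
    {x : ℝ} (hx : x ∈ Ici a) : |f x| ≤ |f a| := by
  rcases hf with hmono | hanti
  · simpa using abs_le_abs_of_antitoneOn_Ici_of_tendsto_zero hmono.neg (by simpa using hlim.neg) hx
  · exact abs_le_abs_of_antitoneOn_Ici_of_tendsto_zero hanti hlim hx

lemma antitoneOn_Ici_of_convexOn_of_tendsto {f : ℝ → ℝ} {L : ℝ} (hconv : ConvexOn ℝ (Ici a) f)
    (hlim : Tendsto f atTop (𝓝 L)) : AntitoneOn f (Ici a) := by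
  intro x hx y _ hxy
  have hweight : Tendsto (fun z => (y - x) / (z - x)) atTop (𝓝 0) :=
    (tendsto_atTop_add_const_right _ (-x) tendsto_id).const_div_atTop (y - x)
  have hchord : Tendsto
      (fun z => (1 - (y - x) / (z - x)) * f x + (y - x) / (z - x) * f z) atTop (𝓝 (f x)) := by
    simpa using ((hweight.const_sub 1).mul_const (f x)).add (hweight.mul hlim)
  refine ge_of_tendsto hchord ?_
  filter_upwards [eventually_gt_atTop x, eventually_ge_atTop y] with z hxz hyz
  have hzx : 0 < z - x := sub_pos.2 hxz
  have hcomb : (1 - (y - x) / (z - x)) * x + (y - x) / (z - x) * z = y := by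
    field_simp
    ring
  have hle := hconv.2 hx (mem_Ici.2 (le_trans hx hxz.le))
    (sub_nonneg.2 <| (div_le_one hzx).2 (by linarith))
    (div_nonneg (sub_nonneg.2 hxy) hzx.le) (sub_add_cancel _ _)
  simpa only [smul_eq_mul, hcomb] using hle

end HalfLine

section LocalInverse

lemma exists_mem_nhds_strictMonoOn_of_hasStrictDerivAt {f : ℝ → ℝ} {f' a : ℝ}
    (hf : HasStrictDerivAt f f' a) (hf' : 0 < f') : ∃ s ∈ 𝓝 a, StrictMonoOn f s := by
  obtain ⟨s, hs, happrox⟩ := hf.hasStrictFDerivAt.approximates_deriv_on_nhds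
    (c := (f' / 2).toNNReal) (Or.inr (by simpa using hf'))
  refine ⟨s, hs, fun x hx y hy hxy => ?_⟩
  have hdist := happrox y hy x hx
  rw [Real.coe_toNNReal _ (by positivity), Real.norm_eq_abs, Real.norm_eq_abs,
    abs_of_pos (sub_pos.2 hxy)] at hdist
  have hlower := (abs_le.1 hdist).1
  simp only [ContinuousLinearMap.toSpanSingleton_apply, smul_eq_mul] at hlower
  nlinarith [mul_pos hf' (sub_pos.2 hxy)]

lemma exists_openPartialHomeomorph_of_hasStrictDerivAt {𝕜 : Type*} [NontriviallyNormedField 𝕜]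
    [CompleteSpace 𝕜] {f : 𝕜 → 𝕜} {f' a : 𝕜} (hf : HasStrictDerivAt f f' a) (hf' : f' ≠ 0)
    {s : Set 𝕜} (hs : s ∈ 𝓝 a) :
    ∃ e : OpenPartialHomeomorph 𝕜 𝕜, ⇑e = f ∧ a ∈ e.source ∧ e.source ⊆ s := by
  have hequiv := hf.hasStrictFDerivAt_equiv hf'
  refine ⟨(hequiv.toOpenPartialHomeomorph f).restr s, ?_, ?_, ?_⟩
  · simp
  · simpa [OpenPartialHomeomorph.restr_source, mem_interior_iff_mem_nhds, hs] using
      hequiv.mem_toOpenPartialHomeomorph_source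
  · rw [OpenPartialHomeomorph.restr_source]
    exact inter_subset_right.trans interior_subset

lemma eqOn_symm_comp_of_isPreconnected {X Y Z : Type*} [TopologicalSpace X] [T2Space X]
    [TopologicalSpace Y] [TopologicalSpace Z] (e : OpenPartialHomeomorph X Y) {s : Set Z}
    (hs : IsPreconnected s) {f : Z → X} {g : Z → Y} (hf : ContinuousOn f s)
    (hg : ContinuousOn g s) (hg_target : MapsTo g s e.target) (hfg : EqOn (e ∘ f) g s)
    {z₀ : Z} (hz₀ : z₀ ∈ s) (hfz₀ : f z₀ ∈ e.source) : EqOn f (e.symm ∘ g) s := by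
  have := isPreconnected_iff_preconnectedSpace.1 hs
  have hfc : Continuous (s.domRestrict f) := hf.domRestrict
  have hgc : Continuous (s.domRestrict (e.symm ∘ g)) :=
    (e.continuousOn_symm.comp hg hg_target).domRestrict
  have heq : {z : s | f z = e.symm (g z)} = s.domRestrict f ⁻¹' e.source := by
    ext z
    constructor
    · intro hz
      change f z ∈ e.source
      exact (show f z = e.symm (g z) from hz) ▸ e.map_target (hg_target z.2)
    · intro hz
      have hfz : e (f z) = g z := hfg z.2
      change f z = e.symm (g z)
      rw [← hfz]
      exact (e.left_inv hz).symm
  have hclopen : IsClopen {z : s | f z = e.symm (g z)} :=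
    ⟨isClosed_eq hfc hgc, heq ▸ e.open_source.preimage hfc⟩
  have huniv := hclopen.eq_univ ⟨⟨z₀, hz₀⟩, heq.ge hfz₀⟩
  exact fun z hz => huniv.ge (mem_univ (⟨z, hz⟩ : s))

end LocalInverse

section AutonomousODE

lemma surjective_of_pos_le_hasDerivAt {f f' : ℝ → ℝ} {c : ℝ} (hc : 0 < c)
    (hf : ∀ x, HasDerivAt f (f' x) x) (hf' : ∀ x, c ≤ f' x) : Function.Surjective f := by
  have hgrowth : ∀ ⦃x y⦄, x ≤ y → c * (y - x) ≤ f y - f x :=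
    mul_sub_le_image_sub_of_le_deriv (fun x => (hf x).differentiableAt)
      fun x => (hf x).deriv.symm ▸ hf' x
  refine Continuous.surjective (continuous_iff_continuousAt.2 fun x => (hf x).continuousAt) ?_ ?_
  · refine tendsto_atTop_mono' _ ?_
      (tendsto_atTop_add_const_right _ (f 0) (tendsto_id.const_mul_atTop hc))
    filter_upwards [eventually_ge_atTop 0] with x hx
    have := hgrowth hx
    simp only [id_eq]
    linarith
  · refine tendsto_atBot_mono' _ ?_
      (tendsto_atBot_add_const_right _ (f 0) (tendsto_id.const_mul_atBot hc))
    filter_upwards [eventually_le_atBot 0] with x hx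
    have := hgrowth hx
    simp only [id_eq]
    linarith

/-- The solution is the inverse of the travel time `∫ dz / v z`. -/
lemma exists_hasDerivAt_comp_self_of_pos_of_le {v : ℝ → ℝ} {K : ℝ} (hv : Continuous v)
    (hpos : ∀ y, 0 < v y) (hle : ∀ y, v y ≤ K) (y₀ : ℝ) :
    ∃ y : ℝ → ℝ, y 0 = y₀ ∧ (∀ x, HasDerivAt y (v (y x)) x) ∧ Tendsto y atTop atTop := by
  have hKpos : 0 < K := (hpos 0).trans_le (hle 0)
  have hinv : Continuous fun z => (v z)⁻¹ := hv.inv₀ fun z => (hpos z).ne'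
  set time : ℝ → ℝ := fun y => ∫ z in y₀..y, (v z)⁻¹
  have htime : ∀ y, HasDerivAt time (v y)⁻¹ y := fun y =>
    (hinv.integral_hasStrictDerivAt y₀ y).hasDerivAt
  have hmono : StrictMono time := strictMono_of_hasDerivAt_pos htime fun y => inv_pos.2 (hpos y)
  have hsurj : Function.Surjective time := surjective_of_pos_le_hasDerivAt (inv_pos.2 hKpos) htime
    fun y => inv_anti₀ (hpos y) (hle y)
  let y := (hmono.orderIsoOfSurjective time hsurj).symm
  have hy : ∀ x, time (y x) = x := (hmono.orderIsoOfSurjective time hsurj).apply_symm_apply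
  refine ⟨y, ?_, fun x => ?_, y.tendsto_atTop⟩
  · exact hmono.injective ((hy 0).trans intervalIntegral.integral_same.symm)
  · simpa using HasDerivAt.of_local_left_inverse y.continuous.continuousAt (htime (y x))
      (inv_ne_zero (hpos _).ne') (Eventually.of_forall hy)

/-- In the logarithmic variable `p = b e^{-y}` the linear bound on `G` says that `y` moves with
bounded speed, so `p` needs infinite time to reach `0`. -/
lemma exists_strictAnti_hasDerivAt_neg {G : ℝ → ℝ} {b K : ℝ} (hb : 0 < b)
    (hG : ContinuousOn G (Ioc 0 b)) (hpos : ∀ s ∈ Ioc 0 b, 0 < G s)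
    (hle : ∀ s ∈ Ioc 0 b, G s ≤ K * s) :
    ∃ p : ℝ → ℝ, Continuous p ∧ p 0 = b ∧ StrictAnti p ∧ Tendsto p atTop (𝓝 0) ∧
      ∀ x ∈ Ioi (0 : ℝ), HasDerivAt p (-G (p x)) x := by
  -- The truncation `max y 0` keeps the argument of `G` in `(0, b]` for all real `y`.
  set q : ℝ → ℝ := fun y => b * Real.exp (-max y 0) with hq_def
  have hq : ∀ y, q y ∈ Ioc 0 b := fun y =>
    ⟨by positivity, mul_le_of_le_one_right hb.le (Real.exp_le_one_iff.2 (by simp))⟩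
  have hqc : Continuous q := by fun_prop
  obtain ⟨y, hy0, hy, hytop⟩ :=
    exists_hasDerivAt_comp_self_of_pos_of_le (v := fun y => G (q y) / q y)
    ((hG.comp_continuous hqc hq).div hqc fun y => (hq y).1.ne')
    (fun y => div_pos (hpos _ (hq y)) (hq y).1)
    (fun y => (div_le_iff₀ (hq y).1).2 (hle _ (hq y))) 0
  have hyc : Continuous y := continuous_iff_continuousAt.2 fun x => (hy x).continuousAt
  have hymono : StrictMono y :=
    strictMono_of_hasDerivAt_pos hy fun x => div_pos (hpos _ (hq _)) (hq _).1
  refine ⟨fun x => b * Real.exp (-y x), by fun_prop, by simp [hy0], ?_, ?_, fun x hx => ?_⟩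
  · exact fun x z hxz => mul_lt_mul_of_pos_left (Real.exp_lt_exp.2 (neg_lt_neg (hymono hxz))) hb
  · simpa using (Real.tendsto_exp_neg_atTop_nhds_zero.comp hytop).const_mul b
  · have hqy : q (y x) = b * Real.exp (-y x) := by
      simp only [hq_def, max_eq_left (hy0 ▸ hymono.monotone (le_of_lt hx))]
    refine ((hy x).neg.exp.const_mul b).congr_deriv ?_
    rw [hqy, Pi.neg_apply]
    field_simp

end AutonomousODE

section DecayingSolution

/-- `p`, with derivative `p'`, solves the boundary value problem `p'' = h(p)` on the half line,
`p(0) = b`, `p(∞) = 0`. -/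
structure IsDecayingSolution (h : ℝ → ℝ) (b : ℝ) (p p' : ℝ → ℝ) : Prop where
  continuousOn : ContinuousOn p (Ici 0)
  apply_zero : p 0 = b
  tendsto : Tendsto p atTop (𝓝 0)
  hasDerivAt : ∀ x ∈ Ioi (0 : ℝ), HasDerivAt p (p' x) x
  hasDerivAt_deriv : ∀ x ∈ Ioi (0 : ℝ), HasDerivAt p' (h (p x)) x

namespace IsDecayingSolution

variable {h p p' q q' : ℝ → ℝ} {b : ℝ}

lemma neg (hp : IsDecayingSolution h b p p') :
    IsDecayingSolution (fun s => -h (-s)) (-b) (-p) (-p') where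
  continuousOn := hp.continuousOn.neg
  apply_zero := by simp [hp.apply_zero]
  tendsto := neg_zero (G := ℝ) ▸ hp.tendsto.neg
  hasDerivAt x hx := (hp.hasDerivAt x hx).neg
  hasDerivAt_deriv x hx := by simpa using (hp.hasDerivAt_deriv x hx).neg

/-- Monotonicity of `h` makes the square of the difference of two solutions convex; it vanishes at
both ends of the half line. -/
lemma eqOn_of_monotoneOn {S : Set ℝ} (hh : MonotoneOn h S) (hp : IsDecayingSolution h b p p')
    (hq : IsDecayingSolution h b q q') (hpS : MapsTo p (Ici 0) S) (hqS : MapsTo q (Ici 0) S) :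
    EqOn p q (Ici 0) := by
  have hconv : ConvexOn ℝ (Ici 0) fun x => (p x - q x) ^ 2 := by
    refine convexOn_of_hasDerivWithinAt2_nonneg (convex_Ici 0)
      (f' := fun x => 2 * (p x - q x) * (p' x - q' x))
      (f'' := fun x => 2 * (p' x - q' x) ^ 2 + 2 * (p x - q x) * (h (p x) - h (q x)))
      ((hp.continuousOn.sub hq.continuousOn).pow 2) ?_ ?_ ?_ <;>
      rw [interior_Ici] <;> intro x hx
    · refine (((hp.hasDerivAt x hx).sub (hq.hasDerivAt x hx)).pow 2).hasDerivWithinAt.congr_deriv ?_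
      simp
    · refine ((((hp.hasDerivAt x hx).sub (hq.hasDerivAt x hx)).const_mul 2).mul
        ((hp.hasDerivAt_deriv x hx).sub (hq.hasDerivAt_deriv x hx))).hasDerivWithinAt.congr_deriv ?_
      simp only [Pi.sub_apply]
      ring
    · have hx' : x ∈ Ici (0 : ℝ) := Ioi_subset_Ici_self hx
      have hsign : 0 ≤ (p x - q x) * (h (p x) - h (q x)) := by
        rcases le_total (p x) (q x) with hpq | hqp
        · exact mul_nonneg_of_nonpos_of_nonpos (sub_nonpos.2 hpq)
            (sub_nonpos.2 (hh (hpS hx') (hqS hx') hpq))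
        · exact mul_nonneg (sub_nonneg.2 hqp) (sub_nonneg.2 (hh (hqS hx') (hpS hx') hqp))
      nlinarith [sq_nonneg (p' x - q' x)]
  have hanti := antitoneOn_Ici_of_convexOn_of_tendsto hconv
    (by simpa using (hp.tendsto.sub hq.tendsto).pow 2)
  intro x hx
  have hle := hanti self_mem_Ici hx hx
  simp only [hp.apply_zero, hq.apply_zero, sub_self, zero_pow two_ne_zero] at hle
  exact sub_eq_zero.1 (pow_eq_zero_iff two_ne_zero |>.1 (le_antisymm hle (sq_nonneg _)))

end IsDecayingSolution

variable {h : ℝ → ℝ} {b : ℝ}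

lemma integral_le_mul_sq {C s : ℝ} (hC : 0 ≤ C) (hs : 0 ≤ s)
    (hh : ∀ t ∈ Ioc 0 s, |h t| ≤ C * t) : ∫ t in 0..s, h t ≤ C * s ^ 2 := by
  have hnorm : ‖∫ t in 0..s, h t‖ ≤ C * s * |s - 0| :=
    intervalIntegral.norm_integral_le_of_norm_le_const fun t ht => by
      rw [uIoc_of_le hs] at ht
      exact (hh t ht).trans (mul_le_mul_of_nonneg_left ht.2 hC)
  rw [sub_zero, abs_of_nonneg hs, mul_assoc, ← sq] at hnorm
  exact (Real.le_norm_self _).trans hnorm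

lemma hasDerivAt_neg_sqrt_two_mul {V p : ℝ → ℝ} {V' x : ℝ} (hV : HasDerivAt V V' (p x))
    (hpos : 0 < V (p x)) (hp : HasDerivAt p (-√(2 * V (p x))) x) :
    HasDerivAt (fun y => -√(2 * V (p y))) V' x := by
  have hpos2 : 0 < 2 * V (p x) := mul_pos two_pos hpos
  refine (((hV.comp x hp).const_mul 2).sqrt hpos2.ne').neg.congr_deriv ?_
  have := Real.sqrt_pos.2 hpos2
  simp only [Function.comp_apply]
  field_simp

/-- Integrating `p'' = h(p)` once with `p, p' → 0` at infinity gives `p' ^ 2 = 2 ∫₀ᵖ h`; the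
decaying solution is found from `p' = -√(2 ∫₀ᵖ h)`. -/
lemma exists_antitoneOn_isDecayingSolution {C : ℝ} (hb : 0 < b) (hh : ContinuousOn h (Icc 0 b))
    (hpos : ∀ s ∈ Ioc 0 b, 0 < h s) (hle : ∀ s ∈ Ioc 0 b, h s ≤ C * s) :
    ∃ p p' : ℝ → ℝ, IsDecayingSolution h b p p' ∧ AntitoneOn p (Ici 0) := by
  set V : ℝ → ℝ := fun s => ∫ t in 0..s, h t
  have hint : ∀ s ∈ Icc 0 b, IntervalIntegrable h MeasureTheory.volume 0 s := fun s hs =>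
    (hh.mono (Icc_subset_Icc_right hs.2)).intervalIntegrable_of_Icc hs.1
  have hVcont : ContinuousOn V (Icc 0 b) := by
    simpa only [uIcc_of_le hb.le] using
      intervalIntegral.continuousOn_primitive_interval (a := 0) (b := b)
        (by simpa only [uIcc_of_le hb.le] using hh.integrableOn_Icc)
  have hVderiv : ∀ s ∈ Ioo 0 b, HasDerivAt V (h s) s := fun s hs =>
    intervalIntegral.integral_hasDerivAt_right (hint s (Ioo_subset_Icc_self hs))
      ((hh.mono Ioo_subset_Icc_self).stronglyMeasurableAtFilter isOpen_Ioo s hs)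
      (hh.continuousAt (Icc_mem_nhds hs.1 hs.2))
  have hVpos : ∀ s ∈ Ioc 0 b, 0 < V s := fun s hs =>
    intervalIntegral.intervalIntegral_pos_of_pos_on (hint s (Ioc_subset_Icc_self hs))
      (fun t ht => hpos t ⟨ht.1, ht.2.le.trans hs.2⟩) hs.1
  have hC : 0 < C := pos_of_mul_pos_left
    ((hpos b (right_mem_Ioc.2 hb)).trans_le (hle b (right_mem_Ioc.2 hb))) hb.le
  have hVle : ∀ s ∈ Ioc 0 b, V s ≤ C * s ^ 2 := fun s hs =>
    integral_le_mul_sq hC.le hs.1.le fun t ht => by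
      have htb : t ∈ Ioc 0 b := ⟨ht.1, ht.2.trans hs.2⟩
      simpa only [abs_of_pos (hpos t htb)] using hle t htb
  obtain ⟨p, hpc, hp0, hpanti, hplim, hpderiv⟩ :=
    exists_strictAnti_hasDerivAt_neg (G := fun s => √(2 * V s)) (K := √(2 * C)) hb
      ((continuousOn_const.mul hVcont).sqrt.mono Ioc_subset_Icc_self)
      (fun s hs => Real.sqrt_pos.2 (mul_pos two_pos (hVpos s hs)))
      (fun s hs => Real.sqrt_le_iff.2 ⟨mul_nonneg (Real.sqrt_nonneg _) hs.1.le, by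
        rw [mul_pow, Real.sq_sqrt (by positivity)]
        linarith [hVle s hs]⟩)
  refine ⟨p, fun x => -√(2 * V (p x)), ⟨hpc.continuousOn, hp0, hplim, hpderiv, fun x hx => ?_⟩,
    hpanti.antitone.antitoneOn _⟩
  have hpx : p x ∈ Ioo 0 b :=
    ⟨(hpanti.antitone.le_of_tendsto hplim (x + 1)).trans_lt (hpanti (lt_add_one x)),
      hp0 ▸ hpanti hx⟩
  exact hasDerivAt_neg_sqrt_two_mul (hVderiv _ hpx) (hVpos _ (Ioo_subset_Ioc_self hpx))
    (hpderiv x hx)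

lemma exists_isDecayingSolution {δ : ℝ} {K : NNReal} (hmono : StrictMonoOn h (Icc (-δ) δ))
    (hlip : LipschitzOnWith K h (Icc (-δ) δ)) (h0 : h 0 = 0) (hb : |b| ≤ δ) :
    ∃ p p' : ℝ → ℝ, IsDecayingSolution h b p p' ∧
      (MonotoneOn p (Ici 0) ∨ AntitoneOn p (Ici 0)) := by
  have hzero : (0 : ℝ) ∈ Icc (-δ) δ := by simpa using (abs_nonneg b).trans hb
  have habs : ∀ s ∈ Icc (-δ) δ, |h s| ≤ K * |s| := fun s hs => by
    simpa [Real.dist_eq, h0] using hlip.dist_le_mul s hs 0 hzero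
  obtain ⟨hδb, hbδ⟩ := abs_le.1 hb
  rcases lt_trichotomy b 0 with hneg | rfl | hpos
  · have hmem : ∀ s ∈ Icc 0 (-b), -s ∈ Icc (-δ) δ := fun s hs =>
      ⟨by linarith [hs.2], by linarith [hs.1, hzero.2]⟩
    obtain ⟨p, p', hp, hanti⟩ := exists_antitoneOn_isDecayingSolution (h := fun s => -h (-s))
      (b := -b) (C := K) (neg_pos.2 hneg) (hlip.continuousOn.comp continuousOn_neg hmem).neg
      (fun s hs => neg_pos.2 (h0 ▸ hmono (hmem s (Ioc_subset_Icc_self hs)) hzero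
        (neg_lt_zero.2 hs.1)))
      (fun s hs => by
        simpa [abs_of_pos hs.1] using
          (neg_le_abs _).trans (habs (-s) (hmem s (Ioc_subset_Icc_self hs))))
    exact ⟨-p, -p', by simpa using hp.neg, Or.inl hanti.neg⟩
  · exact ⟨0, 0, ⟨continuousOn_const, rfl, tendsto_const_nhds, fun x _ => hasDerivAt_const x 0,
      fun x _ => by simp [h0]⟩, Or.inr antitoneOn_const⟩
  · have hmem : Icc 0 b ⊆ Icc (-δ) δ := Icc_subset_Icc hzero.1 hbδ
    obtain ⟨p, p', hp, hanti⟩ := exists_antitoneOn_isDecayingSolution (C := K) hpos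
      (hlip.continuousOn.mono hmem)
      (fun s hs => h0 ▸ hmono hzero (hmem (Ioc_subset_Icc_self hs)) hs.1)
      (fun s hs => by
        simpa [abs_of_pos hs.1] using
          (le_abs_self _).trans (habs s (hmem (Ioc_subset_Icc_self hs))))
    exact ⟨p, p', hp, Or.inr hanti⟩

end DecayingSolution

section IonPotential

variable {γ R Tinf m uinf n : ℝ}

/-- The electric potential at ion density `n` given by Bernoulli's law for the flow with
`n u = u∞`, `T = T∞ n^(γ-1)`, normalised to vanish at `n = 1`. The enthalpy is written as an
integral and not as `γRT∞ (n^(γ-1) - 1)/(γ-1)`, so that the isothermal case `γ = 1` is included. -/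
noncomputable def ionPotential (γ R Tinf m uinf n : ℝ) : ℝ :=
  m / 2 * ((uinf / n) ^ 2 - uinf ^ 2) + γ * R * Tinf * ∫ t in 1..n, t ^ (γ - 2)

/-- The derivative of `ionPotential` in the density `n`. Its vanishing marks the sonic point, and
Bohm's criterion says that it is less than `-1` at `n = 1`. -/
noncomputable def ionPotentialDeriv (γ R Tinf m uinf n : ℝ) : ℝ :=
  γ * R * Tinf * n ^ (γ - 2) - m * uinf ^ 2 / n ^ 3

lemma ionPotential_one : ionPotential γ R Tinf m uinf 1 = 0 := by
  simp [ionPotential]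

lemma ionPotentialDeriv_one :
    ionPotentialDeriv γ R Tinf m uinf 1 = γ * R * Tinf - m * uinf ^ 2 := by
  simp [ionPotentialDeriv]

lemma continuousAt_ionPotentialDeriv (hn : 0 < n) :
    ContinuousAt (ionPotentialDeriv γ R Tinf m uinf) n :=
  (continuousAt_const.mul (Real.continuousAt_rpow_const n _ (Or.inl hn.ne'))).sub
    (continuousAt_const.div (continuousAt_id.pow 3) (pow_ne_zero 3 hn.ne'))

lemma hasStrictDerivAt_ionPotential (hn : 0 < n) :
    HasStrictDerivAt (ionPotential γ R Tinf m uinf) (ionPotentialDeriv γ R Tinf m uinf n) n := by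
  have hpow : ContinuousOn (fun t : ℝ => t ^ (γ - 2)) (Ioi 0) := fun t ht =>
    (Real.continuousAt_rpow_const t _ (Or.inl (ne_of_gt ht))).continuousWithinAt
  have henthalpy : HasStrictDerivAt (fun n => ∫ t in 1..n, t ^ (γ - 2)) (n ^ (γ - 2)) n :=
    intervalIntegral.integral_hasStrictDerivAt_right
      (intervalIntegral.intervalIntegrable_rpow (Or.inr (notMem_uIcc_of_lt one_pos hn)))
      (hpow.stronglyMeasurableAtFilter isOpen_Ioi n hn) (hpow.continuousAt (Ioi_mem_nhds hn))
  have hvelocity : HasStrictDerivAt (fun n => uinf / n) (-uinf / n ^ 2) n := by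
    simpa [div_eq_mul_inv] using (hasStrictDerivAt_inv hn.ne').const_mul uinf
  have hkinetic : HasStrictDerivAt (fun n => m / 2 * ((uinf / n) ^ 2 - uinf ^ 2))
      (m / 2 * (2 * (uinf / n) * (-uinf / n ^ 2))) n := by
    simpa using HasStrictDerivAt.const_mul (m / 2) ((hvelocity.pow 2).sub_const (uinf ^ 2))
  refine (hkinetic.add (henthalpy.const_mul (γ * R * Tinf))).congr_deriv ?_
  simp only [ionPotentialDeriv]
  field_simp
  ring

lemma hasDerivAt_const_div_density {n : ℝ → ℝ} {n' x : ℝ} (hn : HasDerivAt n n' x)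
    (hnx : n x ≠ 0) : HasDerivAt (fun y => uinf / n y) (-uinf * n' / n x ^ 2) x :=
  ((hasDerivAt_const x uinf).div hn hnx).congr_deriv (by ring)

lemma hasDerivAt_mul_density_rpow {n : ℝ → ℝ} {n' x : ℝ} (hn : HasDerivAt n n' x)
    (hnx : n x ≠ 0) : HasDerivAt (fun y => Tinf * n y ^ (γ - 1))
      (Tinf * (n' * (γ - 1) * n x ^ (γ - 2))) x :=
  ((hn.rpow_const (Or.inl hnx)).const_mul Tinf).congr_deriv (by ring_nf)

lemma rpow_sub_one_eq_rpow_sub_two_mul (hn : 0 < n) : n ^ (γ - 1) = n ^ (γ - 2) * n := by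
  rw [← Real.rpow_add_one hn.ne']
  ring_nf

lemma momentum_flux_eq_mul_ionPotentialDeriv (n' : ℝ) (hn : 0 < n) :
    m * n * (uinf / n) * (-uinf * n' / n ^ 2) +
      R * (Tinf * (n' * (γ - 1) * n ^ (γ - 2)) * n + Tinf * n ^ (γ - 1) * n') =
      n * (ionPotentialDeriv γ R Tinf m uinf n * n') := by
  rw [rpow_sub_one_eq_rpow_sub_two_mul hn, ionPotentialDeriv]
  field_simp
  ring

lemma energy_flux_eq_zero (n' : ℝ) (hn : 0 < n) :
    uinf / n * (Tinf * (n' * (γ - 1) * n ^ (γ - 2))) +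
      (γ - 1) * (Tinf * n ^ (γ - 1)) * (-uinf * n' / n ^ 2) = 0 := by
  rw [rpow_sub_one_eq_rpow_sub_two_mul hn]
  field_simp
  ring

end IonPotential

namespace IsPlanarStationary

variable {γ R Tinf m uinf φb x : ℝ} {n u T φ : ℝ → ℝ}

lemma density_pos (h : IsPlanarStationary γ R Tinf m uinf φb n u T φ) (hx : x ∈ Ici 0) :
    0 < n x := by
  obtain ⟨-, -, -, -, ⟨ε, hε, hεn⟩, -⟩ := h
  exact hε.trans_le (hεn x hx)

lemma velocity_eq (h : IsPlanarStationary γ R Tinf m uinf φb n u T φ) (hx : x ∈ Ici 0) :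
    u x = uinf / n x := by
  have hn := h.density_pos hx
  obtain ⟨hnc, huc, -, -, -, -, hnl, hul, -, -, -, n', u', -, -, -, hn', -, hu', -, -, -, -, -, -,
    -, hmass, -⟩ := h
  have hflux := eqOn_Ici_of_hasDerivAt_zero_of_tendsto (hnc.mul huc)
    (fun y hy => ((hn' y hy).mul (hu' y hy)).congr_deriv (hmass y hy)) (hnl.mul hul)
  rw [eq_div_iff hn.ne', mul_comm]
  simpa using hflux hx

lemma temperature_eq (h : IsPlanarStationary γ R Tinf m uinf φb n u T φ) (hu : uinf ≠ 0)
    (hx : x ∈ Ici 0) : T x = Tinf * n x ^ (γ - 1) := by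
  have hnpos : ∀ y ∈ Ici (0 : ℝ), 0 < n y := fun y => h.density_pos
  have hvel : ∀ y ∈ Ici (0 : ℝ), u y = uinf / n y := fun y => h.velocity_eq
  obtain ⟨hnc, -, hTc, -, -, -, hnl, -, hTl, -, -, n', u', T', -, -, hn', -, -, -, hT', -, -, -, -,
    -, hmass, -, henergy, -⟩ := h
  have hentropy := eqOn_Ici_of_hasDerivAt_zero_of_tendsto (f := fun y => T y * n y ^ (1 - γ))
    (hTc.mul (hnc.rpow_const fun y hy => Or.inl (hnpos y hy).ne'))
    (fun y hy => by
      have hy' : y ∈ Ici (0 : ℝ) := Ioi_subset_Ici_self hy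
      have hny := hnpos y hy'
      refine ((hT' y hy).mul ((hn' y hy).rpow_const (Or.inl hny.ne'))).congr_deriv ?_
      have hadiabatic : T' y * n y + T y * n' y * (1 - γ) = 0 := by
        have huy : u y ≠ 0 := hvel y hy' ▸ div_ne_zero hu hny.ne'
        refine (mul_eq_zero.1 ?_).resolve_left huy
        linear_combination n y * henergy y hy - (γ - 1) * T y * hmass y hy
      have hpow : n y ^ (1 - γ) = n y * n y ^ (1 - γ - 1) := by
        rw [Real.rpow_sub_one hny.ne', mul_div_cancel₀ _ hny.ne']
      rw [hpow]
      linear_combination n y ^ (1 - γ - 1) * hadiabatic)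
    (hTl.mul (hnl.rpow_const (Or.inl one_ne_zero)))
  have hconst : T x * n x ^ (1 - γ) = Tinf := by simpa using hentropy hx
  rw [← hconst, mul_assoc, ← Real.rpow_add (hnpos x hx)]
  simp

lemma potential_eq (h : IsPlanarStationary γ R Tinf m uinf φb n u T φ) (hu : uinf ≠ 0)
    (hx : x ∈ Ici 0) : φ x = ionPotential γ R Tinf m uinf (n x) := by
  have hnpos : ∀ y ∈ Ici (0 : ℝ), 0 < n y := fun y => h.density_pos
  have hvel : ∀ y ∈ Ici (0 : ℝ), u y = uinf / n y := fun y => h.velocity_eq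
  have htemp : ∀ y ∈ Ici (0 : ℝ), T y = Tinf * n y ^ (γ - 1) := fun y => h.temperature_eq hu
  obtain ⟨hnc, -, -, hφc, -, -, hnl, -, -, hφl, -, n', u', T', φd, -, hn', -, hu', -, hT', -, hφ',
    -, -, -, -, hmomentum, -⟩ := h
  have hU : ∀ y, 0 < y → ContinuousAt (ionPotential γ R Tinf m uinf) y := fun y hy =>
    (hasStrictDerivAt_ionPotential hy).hasDerivAt.continuousAt
  have hbernoulli := eqOn_Ici_of_hasDerivAt_zero_of_tendsto
    (f := fun y => φ y - ionPotential γ R Tinf m uinf (n y))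
    (hφc.sub fun y hy => (hU _ (hnpos y hy)).comp_continuousWithinAt (hnc y hy))
    (fun y hy => by
      have hy' : y ∈ Ici (0 : ℝ) := Ioi_subset_Ici_self hy
      have hny := hnpos y hy'
      refine ((hφ' y hy).sub
        ((hasStrictDerivAt_ionPotential hny).hasDerivAt.comp y (hn' y hy))).congr_deriv ?_
      have hnear : Ici (0 : ℝ) ∈ 𝓝 y := Ici_mem_nhds hy
      have hu_eq : u' y = -uinf * n' y / n y ^ 2 := (hu' y hy).unique <|
        (hasDerivAt_const_div_density (hn' y hy) hny.ne').congr_of_eventuallyEq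
          (eventually_of_mem hnear hvel)
      have hT_eq : T' y = Tinf * (n' y * (γ - 1) * n y ^ (γ - 2)) := (hT' y hy).unique <|
        (hasDerivAt_mul_density_rpow (hn' y hy) hny.ne').congr_of_eventuallyEq
          (eventually_of_mem hnear htemp)
      have hmom := hmomentum y hy
      rw [hvel y hy', htemp y hy', hu_eq, hT_eq,
        momentum_flux_eq_mul_ionPotentialDeriv _ hny] at hmom
      exact sub_eq_zero.2 (mul_left_cancel₀ hny.ne' hmom).symm)
    (hφl.sub ((hU 1 one_pos).tendsto.comp hnl))
  simpa [ionPotential_one, sub_eq_zero] using hbernoulli hx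

end IsPlanarStationary

section SupersonicBranch

variable {γ R Tinf m uinf φb : ℝ} {n u T φ : ℝ → ℝ} {e : OpenPartialHomeomorph ℝ ℝ}

/-- `e` is the ion potential restricted to densities near the far-field value `1` at which the flow
is supersonic, as a local homeomorphism; `e.symm` gives the density in terms of the potential. -/
structure IsSupersonicBranch (γ R Tinf m uinf : ℝ) (e : OpenPartialHomeomorph ℝ ℝ) : Prop where
  coe_eq : ⇑e = ionPotential γ R Tinf m uinf
  one_mem_source : 1 ∈ e.source
  pos : ∀ n ∈ e.source, 0 < n
  deriv_neg : ∀ n ∈ e.source, ionPotentialDeriv γ R Tinf m uinf n < 0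

lemma exists_isSupersonicBranch (hsupersonic : γ * R * Tinf < m * uinf ^ 2) :
    ∃ e, IsSupersonicBranch γ R Tinf m uinf e := by
  have hneg : ionPotentialDeriv γ R Tinf m uinf 1 < 0 := by
    rw [ionPotentialDeriv_one]
    exact sub_neg.2 hsupersonic
  obtain ⟨e, he, hone, hsource⟩ := exists_openPartialHomeomorph_of_hasStrictDerivAt
    (hasStrictDerivAt_ionPotential one_pos) hneg.ne
    (inter_mem (Ioi_mem_nhds one_pos)
      ((continuousAt_ionPotentialDeriv one_pos).preimage_mem_nhds (Iio_mem_nhds hneg)))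
  exact ⟨e, he, hone, fun n hn => (hsource hn).1, fun n hn => (hsource hn).2⟩

namespace IsSupersonicBranch

lemma zero_mem_target (he : IsSupersonicBranch γ R Tinf m uinf e) : 0 ∈ e.target := by
  simpa [he.coe_eq, ionPotential_one] using e.map_source he.one_mem_source

lemma symm_zero (he : IsSupersonicBranch γ R Tinf m uinf e) : e.symm 0 = 1 := by
  simpa [he.coe_eq, ionPotential_one] using e.left_inv he.one_mem_source

lemma hasStrictDerivAt_symm (he : IsSupersonicBranch γ R Tinf m uinf e) {s : ℝ}
    (hs : s ∈ e.target) :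
    HasStrictDerivAt e.symm (ionPotentialDeriv γ R Tinf m uinf (e.symm s))⁻¹ s := by
  have hsource := e.map_target hs
  refine e.hasStrictDerivAt_symm hs (he.deriv_neg _ hsource).ne ?_
  rw [he.coe_eq]
  exact hasStrictDerivAt_ionPotential (he.pos _ hsource)

/-- The derivative of the charge at `0` is `1 + 1 / U'(1)`, where `U` is the ion potential; Bohm's
criterion `U'(1) < -1` makes it positive. -/
lemma exists_strictMonoOn_charge (he : IsSupersonicBranch γ R Tinf m uinf e)
    (hBohm : γ * R * Tinf + 1 < m * uinf ^ 2) :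
    ∃ δ > 0, ∃ K, Icc (-δ) δ ⊆ e.target ∧
      StrictMonoOn (fun s => e.symm s - Real.exp (-s)) (Icc (-δ) δ) ∧
      LipschitzOnWith K (fun s => e.symm s - Real.exp (-s)) (Icc (-δ) δ) := by
  have hcharge : HasStrictDerivAt (fun s => e.symm s - Real.exp (-s))
      ((γ * R * Tinf - m * uinf ^ 2)⁻¹ + 1) 0 := by
    have hsymm := he.hasStrictDerivAt_symm he.zero_mem_target
    rw [he.symm_zero, ionPotentialDeriv_one] at hsymm
    exact (hsymm.sub (hasStrictDerivAt_neg 0).exp).congr_deriv (by simp)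
  have hpos : 0 < (γ * R * Tinf - m * uinf ^ 2)⁻¹ + 1 := by
    have := inv_lt_one_of_one_lt₀ (show 1 < -(γ * R * Tinf - m * uinf ^ 2) by linarith)
    rw [inv_neg] at this
    linarith
  obtain ⟨s, hs, hmono⟩ := exists_mem_nhds_strictMonoOn_of_hasStrictDerivAt hcharge hpos
  obtain ⟨K, t, ht, hlip⟩ := hcharge.hasStrictFDerivAt.exists_lipschitzOnWith
  obtain ⟨δ, hδ, hball⟩ := Metric.nhds_basis_closedBall.mem_iff.1
    (inter_mem (e.open_target.mem_nhds he.zero_mem_target) (inter_mem hs ht))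
  rw [Real.closedBall_eq_Icc, zero_sub, zero_add] at hball
  exact ⟨δ, hδ, K, fun x hx => (hball hx).1, hmono.mono fun x hx => (hball hx).2.1,
    hlip.mono fun x hx => (hball hx).2.2⟩

end IsSupersonicBranch

namespace IsPlanarStationary

lemma of_isDecayingSolution {ν n' φd : ℝ → ℝ} (hT : 0 < Tinf)
    (hφ : IsDecayingSolution (fun s => ν s - Real.exp (-s)) φb φ φd)
    (hn : EqOn n (ν ∘ φ) (Ioi 0)) (hnc : ContinuousOn n (Ici 0))
    (hnpos : ∀ x ∈ Ici 0, 0 < n x) (hnlim : Tendsto n atTop (𝓝 1))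
    (hn' : ∀ x ∈ Ioi 0, HasDerivAt n (n' x) x) (hn'c : ContinuousOn n' (Ioi 0))
    (hbernoulli : ∀ x ∈ Ioi 0, φ x = ionPotential γ R Tinf m uinf (n x)) :
    IsPlanarStationary γ R Tinf m uinf φb n (fun x => uinf / n x)
      (fun x => Tinf * n x ^ (γ - 1)) φ := by
  have hn0 : ∀ x ∈ Ici 0, n x ≠ 0 := fun x hx => (hnpos x hx).ne'
  have hpos : ∀ x ∈ Ioi (0 : ℝ), 0 < n x := fun x hx => hnpos x (Ioi_subset_Ici_self hx)
  have hnc' : ContinuousOn n (Ioi 0) := hnc.mono Ioi_subset_Ici_self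
  have hTc : ContinuousOn (fun x => Tinf * n x ^ (γ - 1)) (Ici 0) :=
    continuousOn_const.mul (hnc.rpow_const fun x hx => Or.inl (hn0 x hx))
  have hTlim : Tendsto (fun x => Tinf * n x ^ (γ - 1)) atTop (𝓝 Tinf) := by
    simpa using (hnlim.rpow_const (p := γ - 1) (Or.inl one_ne_zero)).const_mul Tinf
  have hulim : Tendsto (fun x => uinf / n x) atTop (𝓝 uinf) := by
    simpa [div_eq_mul_inv] using (hnlim.inv₀ one_ne_zero).const_mul uinf
  have hφd_eq : ∀ x ∈ Ioi 0, φd x = ionPotentialDeriv γ R Tinf m uinf (n x) * n' x := fun x hx =>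
    (hφ.hasDerivAt x hx).unique <|
      ((hasStrictDerivAt_ionPotential (hpos x hx)).hasDerivAt.comp x
        (hn' x hx)).congr_of_eventuallyEq (eventually_of_mem (Ioi_mem_nhds hx) hbernoulli)
  refine ⟨hnc, continuousOn_const.div hnc hn0, hTc, hφ.continuousOn,
    exists_pos_forall_Ici_le_of_tendsto hnc hnpos hnlim one_pos,
    exists_pos_forall_Ici_le_of_tendsto hTc
      (fun x hx => mul_pos hT (Real.rpow_pos_of_pos (hnpos x hx) _)) hTlim hT,
    hnlim, hulim, hTlim, hφ.tendsto, hφ.apply_zero,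
    n', fun x => -uinf * n' x / n x ^ 2, fun x => Tinf * (n' x * (γ - 1) * n x ^ (γ - 2)), φd,
    fun x => n x - Real.exp (-φ x), hn', hn'c,
    fun x hx => hasDerivAt_const_div_density (hn' x hx) (hpos x hx).ne',
    (continuousOn_const.mul hn'c).div (hnc'.pow 2) fun x hx => pow_ne_zero 2 (hpos x hx).ne',
    fun x hx => hasDerivAt_mul_density_rpow (hn' x hx) (hpos x hx).ne',
    continuousOn_const.mul ((hn'c.mul continuousOn_const).mul
      (hnc'.rpow_const fun x hx => Or.inl (hpos x hx).ne')),
    hφ.hasDerivAt, fun x hx => (hφ.hasDerivAt_deriv x hx).continuousAt.continuousWithinAt,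
    fun x hx => (hφ.hasDerivAt_deriv x hx).congr_deriv (by simp only [hn hx, Function.comp_apply]),
    hnc'.sub (hφ.continuousOn.mono Ioi_subset_Ici_self).neg.rexp, fun x hx => ?_, fun x hx => ?_,
    fun x hx => energy_flux_eq_zero _ (hpos x hx), fun x _ => rfl⟩
  · have hnx := hpos x hx
    field_simp
    ring
  · rw [hφd_eq x hx]
    exact momentum_flux_eq_mul_ionPotentialDeriv _ (hpos x hx)

lemma abs_potential_le (h : IsPlanarStationary γ R Tinf m uinf φb n u T φ)
    (hmono : MonotoneOn φ (Ici 0) ∨ AntitoneOn φ (Ici 0)) {x : ℝ} (hx : x ∈ Ici 0) :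
    |φ x| ≤ |φb| := by
  obtain ⟨-, -, -, -, -, -, -, -, -, hφlim, hφ0, -⟩ := h
  exact hφ0 ▸ abs_le_abs_of_monotoneOn_or_antitoneOn_Ici_of_tendsto_zero hmono hφlim hx

lemma density_eqOn_symm_comp (h : IsPlanarStationary γ R Tinf m uinf φb n u T φ) (hu : uinf ≠ 0)
    (he : IsSupersonicBranch γ R Tinf m uinf e) (hφ : MapsTo φ (Ici 0) e.target) :
    EqOn n (e.symm ∘ φ) (Ici 0) := by
  have hbernoulli : EqOn (e ∘ n) φ (Ici 0) := fun x hx => by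
    simpa [he.coe_eq] using (h.potential_eq hu hx).symm
  obtain ⟨hnc, -, -, hφc, -, -, hnlim, -⟩ := h
  obtain ⟨x₀, hx₀, hnx₀⟩ := ((eventually_ge_atTop 0).and
    (hnlim.eventually (e.open_source.mem_nhds he.one_mem_source))).exists
  exact eqOn_symm_comp_of_isPreconnected e isPreconnected_Ici hnc hφc hφ hbernoulli hx₀ hnx₀

lemma exists_isDecayingSolution (h : IsPlanarStationary γ R Tinf m uinf φb n u T φ)
    {ν : ℝ → ℝ} (hn : EqOn n (ν ∘ φ) (Ici 0)) :
    ∃ φd, IsDecayingSolution (fun s => ν s - Real.exp (-s)) φb φ φd := by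
  obtain ⟨-, -, -, hφc, -, -, -, -, -, hφlim, hφ0, -, -, -, φd, φd', -, -, -, -, -, -, hφd, -, hφd',
    -, -, -, -, hpoisson⟩ := h
  refine ⟨φd, hφc, hφ0, hφlim, hφd, fun x hx => (hφd' x hx).congr_deriv ?_⟩
  rw [hpoisson x hx, hn (Ioi_subset_Ici_self hx), Function.comp_apply]

lemma eq_of_mapsTo {S : Set ℝ} {n₁ u₁ T₁ φ₁ n₂ u₂ T₂ φ₂ : ℝ → ℝ} (hu : uinf ≠ 0)
    (he : IsSupersonicBranch γ R Tinf m uinf e) (hS : S ⊆ e.target)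
    (hcharge : MonotoneOn (fun s => e.symm s - Real.exp (-s)) S)
    (h₁ : IsPlanarStationary γ R Tinf m uinf φb n₁ u₁ T₁ φ₁) (hφ₁ : MapsTo φ₁ (Ici 0) S)
    (h₂ : IsPlanarStationary γ R Tinf m uinf φb n₂ u₂ T₂ φ₂) (hφ₂ : MapsTo φ₂ (Ici 0) S)
    {x : ℝ} (hx : x ∈ Ici 0) : n₁ x = n₂ x ∧ u₁ x = u₂ x ∧ T₁ x = T₂ x ∧ φ₁ x = φ₂ x := by
  have hn₁ := h₁.density_eqOn_symm_comp hu he (hφ₁.mono_right hS)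
  have hn₂ := h₂.density_eqOn_symm_comp hu he (hφ₂.mono_right hS)
  obtain ⟨φd₁, hsol₁⟩ := h₁.exists_isDecayingSolution hn₁
  obtain ⟨φd₂, hsol₂⟩ := h₂.exists_isDecayingSolution hn₂
  have hφ : φ₁ x = φ₂ x := hsol₁.eqOn_of_monotoneOn hcharge hsol₂ hφ₁ hφ₂ hx
  have hn : n₁ x = n₂ x := by
    rw [hn₁ hx, hn₂ hx, Function.comp_apply, Function.comp_apply, hφ]
  refine ⟨hn, ?_, ?_, hφ⟩
  · rw [h₁.velocity_eq hx, h₂.velocity_eq hx, hn]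
  · rw [h₁.temperature_eq hu hx, h₂.temperature_eq hu hx, hn]

end IsPlanarStationary

namespace IsSupersonicBranch

lemma isPlanarStationary {p p' : ℝ → ℝ} (he : IsSupersonicBranch γ R Tinf m uinf e)
    (hT : 0 < Tinf) (hp : IsDecayingSolution (fun s => e.symm s - Real.exp (-s)) φb p p')
    (hp_target : MapsTo p (Ici 0) e.target) :
    IsPlanarStationary γ R Tinf m uinf φb (e.symm ∘ p) (fun x => uinf / e.symm (p x))
      (fun x => Tinf * e.symm (p x) ^ (γ - 1)) p := by
  have hsource : ∀ x ∈ Ici 0, e.symm (p x) ∈ e.source := fun x hx => e.map_target (hp_target hx)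
  have hnc : ContinuousOn (e.symm ∘ p) (Ici 0) :=
    e.continuousOn_symm.comp hp.continuousOn hp_target
  have hp'c : ContinuousOn p' (Ioi 0) := fun x hx =>
    (hp.hasDerivAt_deriv x hx).continuousAt.continuousWithinAt
  have hsource' : ∀ x ∈ Ioi 0, e.symm (p x) ∈ e.source := fun x hx =>
    hsource x (Ioi_subset_Ici_self hx)
  have hderivc :
      ContinuousOn (fun x => ionPotentialDeriv γ R Tinf m uinf (e.symm (p x))) (Ioi 0) :=
    fun x hx => (continuousAt_ionPotentialDeriv (he.pos _ (hsource' x hx))).comp_continuousWithinAt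
      (f := e.symm ∘ p) (hnc.mono Ioi_subset_Ici_self x hx)
  refine IsPlanarStationary.of_isDecayingSolution hT hp (fun _ _ => rfl) hnc
    (fun x hx => he.pos _ (hsource x hx))
    (he.symm_zero ▸ (e.continuousAt_symm he.zero_mem_target).tendsto.comp hp.tendsto)
    (fun x hx => (he.hasStrictDerivAt_symm (hp_target (Ioi_subset_Ici_self hx))).hasDerivAt.comp x
      (hp.hasDerivAt x hx))
    ((hderivc.inv₀ fun x hx => (he.deriv_neg _ (hsource' x hx)).ne).mul hp'c) fun x hx => ?_
  rw [← he.coe_eq]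
  exact (e.right_inv (hp_target (Ioi_subset_Ici_self hx))).symm

end IsSupersonicBranch

end SupersonicBranch

theorem nondegenerate_existence_uniqueness_general {γ R Tinf m uinf : ℝ} (hT : 0 < Tinf)
    (hu : uinf ≠ 0) (hBohm : γ * R * Tinf + 1 < m * uinf ^ 2) :
    ∃ δ > 0, ∀ φb : ℝ, |φb| ≤ δ →
      (∃ n u T φ : ℝ → ℝ, IsPlanarStationary γ R Tinf m uinf φb n u T φ ∧
        (MonotoneOn φ (Ici 0) ∨ AntitoneOn φ (Ici 0))) ∧
      ∀ n₁ u₁ T₁ φ₁ n₂ u₂ T₂ φ₂ : ℝ → ℝ,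
        IsPlanarStationary γ R Tinf m uinf φb n₁ u₁ T₁ φ₁ → (∀ x ∈ Ici 0, |φ₁ x| ≤ δ) →
        IsPlanarStationary γ R Tinf m uinf φb n₂ u₂ T₂ φ₂ → (∀ x ∈ Ici 0, |φ₂ x| ≤ δ) →
        ∀ x ∈ Ici 0, n₁ x = n₂ x ∧ u₁ x = u₂ x ∧ T₁ x = T₂ x ∧ φ₁ x = φ₂ x := by
  obtain ⟨e, he⟩ := exists_isSupersonicBranch ((lt_add_one _).trans hBohm)
  obtain ⟨δ, hδ, K, htarget, hmono, hlip⟩ := he.exists_strictMonoOn_charge hBohm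
  refine ⟨δ, hδ, fun φb hb => ⟨?_, ?_⟩⟩
  · obtain ⟨p, p', hp, hp_mono⟩ := exists_isDecayingSolution hmono hlip (by simp [he.symm_zero]) hb
    have hp_mem : MapsTo p (Ici 0) (Icc (-δ) δ) := fun x hx => abs_le.1 <|
      (abs_le_abs_of_monotoneOn_or_antitoneOn_Ici_of_tendsto_zero hp_mono hp.tendsto hx).trans
        (hp.apply_zero ▸ hb)
    exact ⟨_, _, _, p, he.isPlanarStationary hT hp (hp_mem.mono_right htarget), hp_mono⟩
  · intro n₁ u₁ T₁ φ₁ n₂ u₂ T₂ φ₂ h₁ hφ₁ h₂ hφ₂ x hx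
    exact h₁.eq_of_mapsTo hu he htarget hmono.monotoneOn (fun y hy => abs_le.1 (hφ₁ y hy))
      h₂ (fun y hy => abs_le.1 (hφ₂ y hy)) hx

/-- Under the nondegenerate Bohm criterion `m u∞² > γRT∞ + 1`, `u∞ < 0`, there is
`δ > 0` such that for every `φ_b` with `0 < |φ_b| ≤ δ` the planar stationary problem
admits a solution with monotone potential `φ̃`, and this monotone solution is
unique. -/
theorem nondegenerate_existence_uniqueness
    (γ R Tinf m uinf : ℝ)
    (hγ : 1 < γ) (hR : 0 < R) (hT : 0 < Tinf) (hm : 0 < m) (hu : uinf < 0)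
    (hBohm : γ * R * Tinf + 1 < m * uinf ^ 2) :
    ∃ δ > 0, ∀ φb : ℝ, φb ≠ 0 → |φb| ≤ δ →
      (∃ n u T φ : ℝ → ℝ,
        IsPlanarStationary γ R Tinf m uinf φb n u T φ ∧
        (MonotoneOn φ (Set.Ici 0) ∨ AntitoneOn φ (Set.Ici 0))) ∧
      (∀ n₁ u₁ T₁ φ₁ n₂ u₂ T₂ φ₂ : ℝ → ℝ,
        IsPlanarStationary γ R Tinf m uinf φb n₁ u₁ T₁ φ₁ →
        (MonotoneOn φ₁ (Set.Ici 0) ∨ AntitoneOn φ₁ (Set.Ici 0)) →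
        IsPlanarStationary γ R Tinf m uinf φb n₂ u₂ T₂ φ₂ →
        (MonotoneOn φ₂ (Set.Ici 0) ∨ AntitoneOn φ₂ (Set.Ici 0)) →
        ∀ x ∈ Set.Ici (0 : ℝ),
          n₁ x = n₂ x ∧ u₁ x = u₂ x ∧ T₁ x = T₂ x ∧ φ₁ x = φ₂ x) := by
  obtain ⟨δ, hδ, hmain⟩ := nondegenerate_existence_uniqueness_general hT hu.ne hBohm
  refine ⟨δ, hδ, fun φb _ hb => ⟨(hmain φb hb).1, ?_⟩⟩
  intro n₁ u₁ T₁ φ₁ n₂ u₂ T₂ φ₂ h₁ hmono₁ h₂ hmono₂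
  exact (hmain φb hb).2 n₁ u₁ T₁ φ₁ n₂ u₂ T₂ φ₂
    h₁ (fun x hx => (h₁.abs_potential_le hmono₁ hx).trans hb)
    h₂ (fun x hx => (h₂.abs_potential_le hmono₂ hx).trans hb)
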